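/- arXiv:1506.00701 — 7 statements merged into one kernel-verified Lean document; each statement's English description precedes it below -/
import Mathlib

section
/- Let A be a symmetric positive definite n×n real matrix all of whose eigenvalues lie in the interval [Λmin, Λmax] (with 0 < Λmin ≤ Λmax), and let B be an m×n real matrix of full row rank m (1 ≤ m ≤ n) with smallest singular value Σ₁ and largest singular value Σ_m. Then every eigenvalue λ of the symmetric saddle-point matrix C = [[A, Bᵀ], [B, 0]] satisfies λ ∈ [ (Λmin − √(Λmin² + 4Σ_m²))/2 , (Λmax − √(Λmax² + 4Σ₁²))/2 ] ∪ [ Λmin , (Λmax + √(Λmax² + 4Σ_m²))/2 ]. -/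
open Matrix

theorem psd_aux {n : ℕ} (M : Matrix (Fin n) (Fin n) ℝ) (hM : M.IsHermitian)
    (h : ∀ (μ : ℝ) (x : Fin n → ℝ), x ≠ 0 → M.mulVec x = μ • x → 0 ≤ μ) (x : Fin n → ℝ) :
    0 ≤ x ⬝ᵥ M.mulVec x := by
  have hp : M.PosSemidef := by
    rw [hM.posSemidef_iff_eigenvalues_nonneg]
    intro i
    refine h _ (hM.eigenvectorBasis i).ofLp ?_ (hM.mulVec_eigenvectorBasis i)
    intro h0
    have := hM.eigenvectorBasis.orthonormal.ne_zero i
    apply this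
    ext j
    simp [h0]
  simpa using hp.dotProduct_mulVec_nonneg x

/-- Rusten–Winther spectral inclusion for the saddle-point matrix
`C = [[A, Bᵀ], [B, 0]]`: if the symmetric positive definite matrix `A` has all its
eigenvalues in `[Λmin, Λmax]` and `B` has full row rank with smallest singular value
`σ₁` and largest singular value `σm`, then every eigenvalue `lam` of `C` lies in
`[(Λmin - √(Λmin² + 4σm²))/2, (Λmax - √(Λmax² + 4σ₁²))/2] ∪ [Λmin, (Λmax + √(Λmax² + 4σm²))/2]`. -/
theorem stmt0 {n m : ℕ} (hm : 1 ≤ m) (hmn : m ≤ n)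
    (A : Matrix (Fin n) (Fin n) ℝ) (B : Matrix (Fin m) (Fin n) ℝ)
    (Λmin Λmax σ₁ σm : ℝ)
    (hA_symm : A.IsSymm) (hA_pd : A.PosDef)
    (hΛpos : 0 < Λmin) (hΛle : Λmin ≤ Λmax)
    (hA_eig : ∀ (μ : ℝ) (x : Fin n → ℝ), x ≠ 0 → A.mulVec x = μ • x →
      μ ∈ Set.Icc Λmin Λmax)
    (hrank : B.rank = m)
    (hσ₁pos : 0 < σ₁) (hσle : σ₁ ≤ σm)
    -- `σ₁` is the smallest singular value of `B`:
    (hBlow : ∀ y : Fin m → ℝ, σ₁ ^ 2 * (y ⬝ᵥ y) ≤ (Bᵀ.mulVec y) ⬝ᵥ (Bᵀ.mulVec y))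
    -- `σm` is the largest singular value of `B`:
    (hBup : ∀ x : Fin n → ℝ, (B.mulVec x) ⬝ᵥ (B.mulVec x) ≤ σm ^ 2 * (x ⬝ᵥ x))
    (C : Matrix (Fin n ⊕ Fin m) (Fin n ⊕ Fin m) ℝ)
    (hC : C = Matrix.fromBlocks A Bᵀ B 0)
    (lam : ℝ) (z : Fin n ⊕ Fin m → ℝ) (hz : z ≠ 0) (hev : C.mulVec z = lam • z) :
    lam ∈ Set.Icc ((Λmin - Real.sqrt (Λmin ^ 2 + 4 * σm ^ 2)) / 2)
        ((Λmax - Real.sqrt (Λmax ^ 2 + 4 * σ₁ ^ 2)) / 2) ∪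
      Set.Icc Λmin ((Λmax + Real.sqrt (Λmax ^ 2 + 4 * σm ^ 2)) / 2) := by
  have hH : A.IsHermitian := hA_pd.1
  have hlow : ∀ x : Fin n → ℝ, Λmin * (x ⬝ᵥ x) ≤ x ⬝ᵥ A.mulVec x := by
    intro x
    have := psd_aux (A - Λmin • (1 : Matrix (Fin n) (Fin n) ℝ))
      (hH.sub (by simp [Matrix.IsHermitian])) (by
        intro μ v hv he
        have := hA_eig (μ + Λmin) v hv (by
          rw [Matrix.sub_mulVec, Matrix.smul_mulVec, Matrix.one_mulVec] at he
          rw [add_smul, ← he]; abel)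
        linarith [this.1]) x
    rw [Matrix.sub_mulVec, Matrix.smul_mulVec, Matrix.one_mulVec, dotProduct_sub,
      dotProduct_smul, smul_eq_mul] at this
    linarith
  have hup : ∀ x : Fin n → ℝ, x ⬝ᵥ A.mulVec x ≤ Λmax * (x ⬝ᵥ x) := by
    intro x
    have := psd_aux (Λmax • (1 : Matrix (Fin n) (Fin n) ℝ) - A)
      (Matrix.IsHermitian.sub (by simp [Matrix.IsHermitian]) hH) (by
        intro μ v hv he
        have := hA_eig (Λmax - μ) v hv (by
          rw [Matrix.sub_mulVec, Matrix.smul_mulVec, Matrix.one_mulVec] at he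
          rw [sub_smul, ← he]; abel)
        linarith [this.2]) x
    rw [Matrix.sub_mulVec, Matrix.smul_mulVec, Matrix.one_mulVec, dotProduct_sub,
      dotProduct_smul, smul_eq_mul] at this
    linarith
  have hpos : ∀ {k : ℕ} (x : Fin k → ℝ), x ≠ 0 → 0 < x ⬝ᵥ x := by
    intro k x hx
    have h0 : 0 ≤ x ⬝ᵥ x := Finset.sum_nonneg fun i _ => mul_self_nonneg _
    exact lt_of_le_of_ne h0 fun h => hx (dotProduct_self_eq_zero.1 h.symm)
  obtain ⟨x, y, rfl⟩ : ∃ (x : Fin n → ℝ) (y : Fin m → ℝ), z = Sum.elim x y :=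
    ⟨z ∘ Sum.inl, z ∘ Sum.inr, by ext i; cases i <;> rfl⟩
  rw [hC, Matrix.fromBlocks_mulVec] at hev
  have e1 : A.mulVec x + Bᵀ.mulVec y = lam • x := by
    ext i; simpa using congrFun hev (Sum.inl i)
  have e2 : B.mulVec x = lam • y := by
    ext i; simpa using congrFun hev (Sum.inr i)
  have hx : x ≠ 0 := by
    intro h0
    subst h0
    have hw : Bᵀ.mulVec y = 0 := by simpa using e1
    have hy : y = 0 := by
      by_contra hy
      have h1 := hBlow y
      rw [hw] at h1
      have h2 := hpos y hy
      simp only [dotProduct_zero] at h1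
      have : 0 < σ₁ ^ 2 * (y ⬝ᵥ y) := by positivity
      linarith
    subst hy
    apply hz
    ext i; cases i <;> rfl
  have hX := hpos x hx
  have hxw : x ⬝ᵥ Bᵀ.mulVec y = lam * (y ⬝ᵥ y) := by
    rw [Matrix.mulVec_transpose, dotProduct_comm, ← Matrix.dotProduct_mulVec, e2,
      dotProduct_smul, smul_eq_mul]
  have hE : x ⬝ᵥ A.mulVec x + lam * (y ⬝ᵥ y) = lam * (x ⬝ᵥ x) := by
    rw [← hxw, ← dotProduct_add, e1, dotProduct_smul, smul_eq_mul]
  have hB := hBup x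
  rw [e2, dotProduct_smul, smul_dotProduct, smul_eq_mul, smul_eq_mul] at hB
  have hl := hlow x
  have hu := hup x
  have hY : 0 ≤ y ⬝ᵥ y := Finset.sum_nonneg fun i _ => mul_self_nonneg _
  have hlowx := hlow
  rcases lt_trichotomy lam 0 with hneg | h0 | hlp
  · left
    have hy : y ≠ 0 := by
      intro h0
      subst h0
      have := (hA_eig lam x hx (by simpa using e1)).1
      linarith
    have hYp := hpos y hy
    constructor
    · have hq : lam ^ 2 ≤ lam * Λmin + σm ^ 2 := by
        refine le_of_mul_le_mul_right ?_ hX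
        nlinarith [mul_le_mul_of_nonpos_left hl hneg.le]
      have : Λmin - 2 * lam ≤ Real.sqrt (Λmin ^ 2 + 4 * σm ^ 2) :=
        Real.le_sqrt_of_sq_le (by nlinarith)
      linarith
    · have hw : Bᵀ.mulVec y = lam • x - A.mulVec x := by rw [← e1]; abel
      have hBl := hBlow y
      generalize Bᵀ.mulVec y = w at *
      have hL : 0 < Λmax - lam := by linarith
      -- expand positivity at L x + w
      have hAx : A.mulVec x = lam • x - w := by rw [hw]; abel
      have hsym : x ⬝ᵥ A.mulVec w = w ⬝ᵥ A.mulVec x := by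
        rw [Matrix.dotProduct_mulVec, ← Matrix.mulVec_transpose, hA_symm.eq, dotProduct_comm]
      have h1 := hlow ((Λmax - lam) • x + w)
      have h2 := hup w
      have h3 : 0 ≤ ((Λmax - lam) • x + w) ⬝ᵥ ((Λmax - lam) • x + w) :=
        Finset.sum_nonneg fun i _ => mul_self_nonneg _
      have hxA : w ⬝ᵥ A.mulVec x = lam * (x ⬝ᵥ w) - w ⬝ᵥ w := by
        rw [hAx, dotProduct_sub, dotProduct_smul, smul_eq_mul, dotProduct_comm w x]
      have h4 : 0 ≤ ((Λmax - lam) • x + w) ⬝ᵥ A.mulVec ((Λmax - lam) • x + w)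
          - lam * (((Λmax - lam) • x + w) ⬝ᵥ ((Λmax - lam) • x + w)) := by
        nlinarith [mul_nonneg hΛpos.le h3, mul_nonneg (neg_nonneg.2 hneg.le) h3]
      simp only [Matrix.mulVec_add, Matrix.mulVec_smul, dotProduct_add, add_dotProduct,
        dotProduct_smul, smul_dotProduct, smul_eq_mul, hsym, hxA, dotProduct_comm w x, hxw] at h4
      have hE' : x ⬝ᵥ A.mulVec x = lam * (x ⬝ᵥ x) - lam * (y ⬝ᵥ y) := by linarith
      rw [hE'] at h4
      have h5 : w ⬝ᵥ w ≤ (Λmax - lam) * (-lam * (y ⬝ᵥ y)) := by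
        refine le_of_mul_le_mul_left ?_ hL
        nlinarith
      have hq : σ₁ ^ 2 ≤ (Λmax - lam) * (-lam) := by
        refine le_of_mul_le_mul_right ?_ hYp
        nlinarith
      have : Real.sqrt (Λmax ^ 2 + 4 * σ₁ ^ 2) ≤ Λmax - 2 * lam :=
        Real.sqrt_le_iff.2 ⟨by linarith, by nlinarith⟩
      linarith
  · exfalso
    subst h0
    have := mul_pos hΛpos hX
    linarith
  · right
    constructor
    · refine le_of_mul_le_mul_right ?_ hX
      nlinarith [mul_nonneg hlp.le hY]
    · have hq : lam ^ 2 ≤ lam * Λmax + σm ^ 2 := by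
        refine le_of_mul_le_mul_right ?_ hX
        nlinarith [mul_le_mul_of_nonneg_left hu hlp.le]
      have : 2 * lam - Λmax ≤ Real.sqrt (Λmax ^ 2 + 4 * σm ^ 2) :=
        Real.le_sqrt_of_sq_le (by nlinarith)
      linarith
end

section
/- Let A be a symmetric n×n real matrix satisfying xᵀAx ≥ Λmin·‖x‖² for all x ∈ ℝⁿ, where Λmin > 0, and let B be any m×n real matrix. Then every positive eigenvalue λ of the saddle-point matrix C = [[A, Bᵀ], [B, 0]] satisfies λ ≥ Λmin. -/
open Matrix

/-- Lower bound for the positive eigenvalues of the saddle-point matrix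
`C = [[A, Bᵀ], [B, 0]]`: if the symmetric matrix `A` satisfies
`xᵀ A x ≥ Λmin ‖x‖²` with `Λmin > 0`, then every positive eigenvalue `lam` of `C`
satisfies `lam ≥ Λmin`. -/
theorem stmt1 {n m : ℕ} (A : Matrix (Fin n) (Fin n) ℝ) (B : Matrix (Fin m) (Fin n) ℝ)
    (Λmin : ℝ) (hΛpos : 0 < Λmin) (hA_symm : A.IsSymm)
    (hA : ∀ x : Fin n → ℝ, Λmin * (x ⬝ᵥ x) ≤ x ⬝ᵥ A.mulVec x)
    (lam : ℝ) (hlam : 0 < lam) (z : Fin n ⊕ Fin m → ℝ) (hz : z ≠ 0)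
    (hev : (Matrix.fromBlocks A Bᵀ B 0).mulVec z = lam • z) :
    Λmin ≤ lam := by
  obtain ⟨x, y, rfl⟩ : ∃ (x : Fin n → ℝ) (y : Fin m → ℝ), z = Sum.elim x y :=
    ⟨z ∘ Sum.inl, z ∘ Sum.inr, by simp⟩
  rw [Matrix.fromBlocks_mulVec] at hev
  have h1 : A.mulVec x + Bᵀ.mulVec y = lam • x := by
    funext i
    simpa using congrFun hev (Sum.inl i)
  have h2 : B.mulVec x = lam • y := by
    funext i
    simpa using congrFun hev (Sum.inr i)
  have h3 : x ⬝ᵥ A.mulVec x + x ⬝ᵥ Bᵀ.mulVec y = lam * (x ⬝ᵥ x) := by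
    rw [← dotProduct_add, h1, dotProduct_smul, smul_eq_mul]
  have h4 : x ⬝ᵥ Bᵀ.mulVec y = lam * (y ⬝ᵥ y) := by
    rw [Matrix.mulVec_transpose, dotProduct_comm, ← Matrix.dotProduct_mulVec, h2,
      dotProduct_smul, smul_eq_mul]
  have hy : 0 ≤ y ⬝ᵥ y := Finset.sum_nonneg fun i _ => mul_self_nonneg (y i)
  have hx : 0 ≤ x ⬝ᵥ x := Finset.sum_nonneg fun i _ => mul_self_nonneg (x i)
  have hx0 : x ⬝ᵥ x ≠ 0 := by
    intro h
    have hx' : x = 0 := dotProduct_self_eq_zero.mp h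
    subst hx'
    have hy' : y = 0 := by
      rw [Matrix.mulVec_zero] at h2
      exact (smul_eq_zero.mp h2.symm).resolve_left hlam.ne'
    subst hy'
    apply hz
    funext i
    cases i <;> rfl
  have hxp : 0 < x ⬝ᵥ x := lt_of_le_of_ne hx (Ne.symm hx0)
  have h5 := hA x
  have h6 := mul_nonneg hlam.le hy
  exact le_of_mul_le_mul_right (by linarith) hxp
end

section
/- Let A be a symmetric n×n real matrix satisfying xᵀAx ≤ Λmax·‖x‖² for all x ∈ ℝⁿ, and let B be an m×n real matrix satisfying ‖Bx‖ ≤ Σ·‖x‖ for all x ∈ ℝⁿ (with Σ ≥ 0). Then every eigenvalue λ of the saddle-point matrix C = [[A, Bᵀ], [B, 0]] satisfies λ ≤ (Λmax + √(Λmax² + 4Σ²))/2. -/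
open Matrix

/-- Upper bound for the spectrum of the saddle-point matrix `C = [[A, Bᵀ], [B, 0]]`:
if the symmetric matrix `A` satisfies `xᵀ A x ≤ Λmax ‖x‖²` and `‖B x‖ ≤ σ ‖x‖`
for all `x`, then every eigenvalue `lam` of `C` satisfies
`lam ≤ (Λmax + √(Λmax² + 4σ²))/2`. -/
theorem stmt2 {n m : ℕ} (A : Matrix (Fin n) (Fin n) ℝ) (B : Matrix (Fin m) (Fin n) ℝ)
    (Λmax σ : ℝ) (hσ : 0 ≤ σ) (hA_symm : A.IsSymm)
    (hA : ∀ x : Fin n → ℝ, x ⬝ᵥ A.mulVec x ≤ Λmax * (x ⬝ᵥ x))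
    (hB : ∀ x : Fin n → ℝ, (B.mulVec x) ⬝ᵥ (B.mulVec x) ≤ σ ^ 2 * (x ⬝ᵥ x))
    (lam : ℝ) (z : Fin n ⊕ Fin m → ℝ) (hz : z ≠ 0)
    (hev : (Matrix.fromBlocks A Bᵀ B 0).mulVec z = lam • z) :
    lam ≤ (Λmax + Real.sqrt (Λmax ^ 2 + 4 * σ ^ 2)) / 2 := by
  rcases le_or_gt lam 0 with hl | hl
  · have h1 : |Λmax| ≤ Real.sqrt (Λmax ^ 2 + 4 * σ ^ 2) :=
      Real.abs_le_sqrt (by nlinarith [sq_nonneg σ])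
    have h2 := neg_abs_le Λmax
    linarith
  · obtain ⟨x, y, rfl⟩ : ∃ x y, z = Sum.elim x y :=
      ⟨z ∘ Sum.inl, z ∘ Sum.inr, (Sum.elim_comp_inl_inr z).symm⟩
    rw [Matrix.fromBlocks_mulVec] at hev
    have e1 : A *ᵥ x + Bᵀ *ᵥ y = lam • x := by
      funext i
      simpa using congrFun hev (Sum.inl i)
    have e2 : B *ᵥ x = lam • y := by
      funext i
      simpa using congrFun hev (Sum.inr i)
    have hx : x ≠ 0 := by
      rintro rfl
      apply hz
      have hy : y = 0 := by
        rw [Matrix.mulVec_zero] at e2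
        exact (smul_eq_zero.mp e2.symm).resolve_left hl.ne'
      subst hy
      funext i
      cases i <;> rfl
    have hxx : 0 < x ⬝ᵥ x := by
      have h0 : 0 ≤ x ⬝ᵥ x := Finset.sum_nonneg fun i _ => mul_self_nonneg (x i)
      exact lt_of_le_of_ne h0 fun h => hx (dotProduct_self_eq_zero.mp h.symm)
    have h1 := congrArg (fun v => x ⬝ᵥ v) e1
    simp only [dotProduct_add, dotProduct_smul, smul_eq_mul] at h1
    have h3 : x ⬝ᵥ Bᵀ *ᵥ y = lam * (y ⬝ᵥ y) := by
      rw [Matrix.dotProduct_mulVec, Matrix.vecMul_transpose, e2, smul_dotProduct, smul_eq_mul]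
    have h4 := hB x
    rw [e2, smul_dotProduct, dotProduct_smul, smul_eq_mul, smul_eq_mul] at h4
    have h5 := mul_le_mul_of_nonneg_left (hA x) hl.le
    have h6 : (lam ^ 2 - Λmax * lam - σ ^ 2) * (x ⬝ᵥ x) ≤ 0 := by
      have : lam * (lam * (x ⬝ᵥ x)) = lam * (x ⬝ᵥ A *ᵥ x) + lam * (lam * (y ⬝ᵥ y)) := by
        rw [← h1, h3]; ring
      nlinarith
    have h7 : lam ^ 2 - Λmax * lam - σ ^ 2 ≤ 0 := by
      by_contra hc
      push Not at hc
      linarith [mul_pos hc hxx]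
    have h8 : 2 * lam - Λmax ≤ Real.sqrt (Λmax ^ 2 + 4 * σ ^ 2) :=
      Real.le_sqrt_of_sq_le (by nlinarith)
    linarith
end

section
/- Let A be a symmetric n×n real matrix satisfying xᵀAx ≥ Λmin·‖x‖² for all x ∈ ℝⁿ (Λmin ∈ ℝ), and let B be an m×n real matrix satisfying ‖Bx‖ ≤ Σ·‖x‖ for all x ∈ ℝⁿ (with Σ ≥ 0). Then every negative eigenvalue λ of the saddle-point matrix C = [[A, Bᵀ], [B, 0]] satisfies λ ≥ (Λmin − √(Λmin² + 4Σ²))/2. -/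
open Matrix

/-- Lower bound for the negative eigenvalues of the saddle-point matrix
`C = [[A, Bᵀ], [B, 0]]`: if the symmetric matrix `A` satisfies
`xᵀ A x ≥ Λmin ‖x‖²` and `‖B x‖ ≤ σ ‖x‖` for all `x`, then every negative
eigenvalue `lam` of `C` satisfies `lam ≥ (Λmin − √(Λmin² + 4σ²))/2`. -/
theorem stmt3 {n m : ℕ} (A : Matrix (Fin n) (Fin n) ℝ) (B : Matrix (Fin m) (Fin n) ℝ)
    (Λmin σ : ℝ) (hσ : 0 ≤ σ) (hA_symm : A.IsSymm)
    (hA : ∀ x : Fin n → ℝ, Λmin * (x ⬝ᵥ x) ≤ x ⬝ᵥ A.mulVec x)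
    (hB : ∀ x : Fin n → ℝ, (B.mulVec x) ⬝ᵥ (B.mulVec x) ≤ σ ^ 2 * (x ⬝ᵥ x))
    (lam : ℝ) (hlam : lam < 0) (z : Fin n ⊕ Fin m → ℝ) (hz : z ≠ 0)
    (hev : (Matrix.fromBlocks A Bᵀ B 0).mulVec z = lam • z) :
    (Λmin - Real.sqrt (Λmin ^ 2 + 4 * σ ^ 2)) / 2 ≤ lam := by
  obtain ⟨x, y, rfl⟩ : ∃ x y, z = Sum.elim x y :=
    ⟨z ∘ Sum.inl, z ∘ Sum.inr, (Sum.elim_comp_inl_inr z).symm⟩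
  rw [Matrix.fromBlocks_mulVec] at hev
  have h1 : A *ᵥ x + Bᵀ *ᵥ y = lam • x := by
    funext i
    simpa using congrFun hev (Sum.inl i)
  have h2 : B *ᵥ x = lam • y := by
    funext i
    simpa using congrFun hev (Sum.inr i)
  have hx : x ≠ 0 := by
    rintro rfl
    apply hz
    have hy : y = 0 := by
      have h3 : lam • y = 0 := by rw [← h2]; simp
      exact (smul_eq_zero.mp h3).resolve_left hlam.ne
    subst hy
    funext i
    cases i <;> rfl
  have hpos : 0 < x ⬝ᵥ x := by
    refine lt_of_le_of_ne ?_ (fun h => hx (dotProduct_self_eq_zero.mp h.symm))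
    exact Finset.sum_nonneg (fun i _ => mul_self_nonneg (x i))
  have h4 : x ⬝ᵥ A *ᵥ x + (B *ᵥ x) ⬝ᵥ y = lam * (x ⬝ᵥ x) := by
    have h5 := congrArg (fun v => x ⬝ᵥ v) h1
    simp only [dotProduct_add, dotProduct_smul, smul_eq_mul] at h5
    rw [← h5, Matrix.dotProduct_mulVec x Bᵀ y, Matrix.vecMul_transpose]
  have h6 : (B *ᵥ x) ⬝ᵥ (B *ᵥ x) = lam * ((B *ᵥ x) ⬝ᵥ y) := by
    conv_lhs => rw [h2, dotProduct_smul, ← h2]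
    rfl
  have hAx := mul_le_mul_of_nonpos_left (hA x) hlam.le
  have hBx := hB x
  have h7 : lam ^ 2 * (x ⬝ᵥ x) ≤ (lam * Λmin + σ ^ 2) * (x ⬝ᵥ x) := by
    have h8 := congrArg (fun t => lam * t) h4
    simp only [mul_add] at h8
    nlinarith
  have h9 := le_of_mul_le_mul_right h7 hpos
  have h10 : |2 * lam - Λmin| ≤ Real.sqrt (Λmin ^ 2 + 4 * σ ^ 2) :=
    Real.abs_le_sqrt (by nlinarith)
  have h11 := (abs_le.mp h10).1
  linarith
end

section
/- Let A be a symmetric positive semidefinite n×n real matrix satisfying xᵀAx ≤ Λmax·‖x‖² for all x ∈ ℝⁿ, and let B be a nonzero m×n real matrix whose smallest nonzero singular value is Σ₁, i.e., ‖Bᵀy‖ ≥ Σ₁‖y‖ for every y in the column space of B. Then every negative eigenvalue λ of the saddle-point matrix C = [[A, Bᵀ], [B, 0]] satisfies λ ≤ (Λmax − √(Λmax² + 4Σ₁²))/2. -/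
open Matrix

/-- Upper bound for the negative eigenvalues of the saddle-point matrix
`C = [[A, Bᵀ], [B, 0]]`: if the symmetric positive semidefinite matrix `A`
satisfies `xᵀ A x ≤ Λmax ‖x‖²` and the nonzero matrix `B` has smallest nonzero
singular value `σ₁` (i.e. `‖Bᵀ y‖ ≥ σ₁ ‖y‖` for every `y` in the column space
of `B`), then every negative eigenvalue `lam` of `C` satisfies
`lam ≤ (Λmax − √(Λmax² + 4σ₁²))/2`. -/
theorem stmt4 {n m : ℕ} (A : Matrix (Fin n) (Fin n) ℝ) (B : Matrix (Fin m) (Fin n) ℝ)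
    (Λmax σ₁ : ℝ) (hσ₁pos : 0 < σ₁) (hA_symm : A.IsSymm) (hA_psd : A.PosSemidef)
    (hA : ∀ x : Fin n → ℝ, x ⬝ᵥ A.mulVec x ≤ Λmax * (x ⬝ᵥ x))
    (hB_ne : B ≠ 0)
    (hB : ∀ y : Fin m → ℝ, (∃ x : Fin n → ℝ, B.mulVec x = y) →
      σ₁ ^ 2 * (y ⬝ᵥ y) ≤ (Bᵀ.mulVec y) ⬝ᵥ (Bᵀ.mulVec y))
    (lam : ℝ) (hlam : lam < 0) (z : Fin n ⊕ Fin m → ℝ) (hz : z ≠ 0)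
    (hev : (Matrix.fromBlocks A Bᵀ B 0).mulVec z = lam • z) :
    lam ≤ (Λmax - Real.sqrt (Λmax ^ 2 + 4 * σ₁ ^ 2)) / 2 := by
  obtain ⟨x, y, rfl⟩ : ∃ (x : Fin n → ℝ) (y : Fin m → ℝ), z = Sum.elim x y :=
    ⟨z ∘ Sum.inl, z ∘ Sum.inr, by simp⟩
  rw [Matrix.fromBlocks_mulVec] at hev
  have h1 : A *ᵥ x + Bᵀ *ᵥ y = lam • x := by
    funext i
    simpa using congrFun hev (Sum.inl i)
  have h2 : B *ᵥ x = lam • y := by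
    funext i
    simpa using congrFun hev (Sum.inr i)
  have hpsd : ∀ v : Fin n → ℝ, 0 ≤ v ⬝ᵥ A *ᵥ v := fun v => by
    simpa using hA_psd.dotProduct_mulVec_nonneg v
  have hsq : ∀ {k : ℕ} (v : Fin k → ℝ), 0 ≤ v ⬝ᵥ v := fun v =>
    Finset.sum_nonneg fun i _ => mul_self_nonneg _
  have hpos : ∀ {k : ℕ} (v : Fin k → ℝ), v ≠ 0 → 0 < v ⬝ᵥ v := fun v hv =>
    lt_of_le_of_ne (hsq v) fun h => hv (dotProduct_self_eq_zero.mp h.symm)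
  have hx : x ≠ 0 := by
    rintro rfl
    have : y = 0 := by
      have h3 : lam • y = 0 := by rw [← h2]; simp
      exact (smul_eq_zero.mp h3).resolve_left hlam.ne
    subst this
    exact hz (by ext i; cases i <;> rfl)
  have hΛ : 0 ≤ Λmax := by
    have h3 := (hpsd x).trans (hA x)
    exact nonneg_of_mul_nonneg_left h3 (hpos x hx)
  have hBy := hB y ⟨lam⁻¹ • x, by rw [Matrix.mulVec_smul, h2, smul_smul, inv_mul_cancel₀ hlam.ne, one_smul]⟩
  have hxw : x ⬝ᵥ Bᵀ *ᵥ y = lam * (y ⬝ᵥ y) := by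
    rw [Matrix.dotProduct_mulVec, Matrix.vecMul_transpose, h2, smul_dotProduct, smul_eq_mul]
  generalize hw : Bᵀ *ᵥ y = w at *
  have hAx : A *ᵥ x = lam • x - w := eq_sub_of_add_eq h1
  have hy : y ≠ 0 := by
    rintro rfl
    have hw0 : w = 0 := by rw [← hw]; simp
    have h3 := hpsd x
    rw [hAx, hw0, sub_zero, dotProduct_smul, smul_eq_mul] at h3
    nlinarith [hpos x hx]
  have hxAw : x ⬝ᵥ A *ᵥ w = w ⬝ᵥ A *ᵥ x := by
    rw [Matrix.dotProduct_mulVec, ← Matrix.mulVec_transpose, hA_symm.eq, dotProduct_comm]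
  have hv := hpsd ((Λmax - lam) • x + w)
  have hvv := hsq ((Λmax - lam) • x + w)
  simp only [Matrix.mulVec_add, Matrix.mulVec_smul, add_dotProduct, dotProduct_add,
    smul_dotProduct, dotProduct_smul, smul_eq_mul, hxAw, hAx, dotProduct_sub,
    dotProduct_comm w x, hxw] at hv hvv
  have hd := hA w
  have hyy := hpos y hy
  have hK : 0 < Λmax - lam := by linarith
  have hc : w ⬝ᵥ w ≤ -(Λmax - lam) * (lam * (y ⬝ᵥ y)) := by
    have h3 := mul_nonneg (neg_nonneg.mpr hlam.le) hvv
    have : 0 ≤ (Λmax - lam) * (-(Λmax - lam) * (lam * (y ⬝ᵥ y)) - w ⬝ᵥ w) := by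
      linarith
    linarith [nonneg_of_mul_nonneg_right this hK]
  have hfin : σ₁ ^ 2 ≤ -(Λmax - lam) * lam := by
    refine le_of_mul_le_mul_right ?_ hyy
    linarith
  have : Real.sqrt (Λmax ^ 2 + 4 * σ₁ ^ 2) ≤ Λmax - 2 * lam := by
    apply Real.sqrt_le_iff.mpr
    constructor
    · linarith
    · nlinarith
  linarith
end

section
/- Let n ≥ 1, let a = t₀ < t₁ < … < t_n = b be a partition of the interval [a, b], let y₀, …, y_n ∈ ℝ, and let v : [a, b] → ℝ be the continuous piecewise affine function with v(t_j) = y_j for all j that is affine on each subinterval [t_{j-1}, t_j]. Define the patch widths ω₀ := t₁ − t₀, ω_n := t_n − t_{n-1}, and ω_j := t_{j+1} − t_{j-1} for 0 < j < n. Then (1/6) · Σ_{j=0}^{n} y_j² ω_j ≤ ∫_a^b v(t)² dt ≤ (1/2) · Σ_{j=0}^{n} y_j² ω_j. -/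
open scoped BigOperators

theorem aux_int (p q x z : ℝ) (hxz : x < z) :
    ∫ s in x..z, (p + (q - p) * (s - x) / (z - x)) ^ 2 = (z - x) / 3 * (p ^ 2 + p * q + q ^ 2) := by
  have hne : z - x ≠ 0 := (sub_pos.2 hxz).ne'
  have hd : ∀ s ∈ Set.uIcc x z, HasDerivAt
      (fun s => p ^ 2 * (s - x) + p * ((q - p) / (z - x)) * (s - x) ^ 2
        + ((q - p) / (z - x)) ^ 2 / 3 * (s - x) ^ 3)
      ((p + (q - p) * (s - x) / (z - x)) ^ 2) s := by
    intro s _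
    have h1 : HasDerivAt (fun s : ℝ => s - x) 1 s := (hasDerivAt_id s).sub_const x
    have h2 := ((h1.const_mul (p ^ 2)).add ((h1.pow 2).const_mul (p * ((q - p) / (z - x))))).add
      ((h1.pow 3).const_mul (((q - p) / (z - x)) ^ 2 / 3))
    refine h2.congr_deriv ?_
    push_cast
    field_simp
    ring
  rw [intervalIntegral.integral_eq_sub_of_hasDerivAt hd
    (Continuous.intervalIntegrable (by fun_prop) _ _)]
  field_simp
  ring

theorem aux_sum (n : ℕ) (t y ω : ℕ → ℝ) (hω0 : ω 0 = t 1 - t 0)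
    (hωj : ∀ j, 0 < j → j < n → ω j = t (j + 1) - t (j - 1)) (k : ℕ) (hk : k + 1 ≤ n) :
    ∑ j ∈ Finset.range (k + 1), (y j) ^ 2 * ω j + y (k + 1) ^ 2 * (t (k + 1) - t k)
      = ∑ j ∈ Finset.range (k + 1), (y j ^ 2 + y (j + 1) ^ 2) * (t (j + 1) - t j) := by
  induction k with
  | zero => simp [hω0]; ring
  | succ k ih =>
    have ih' := ih (by omega)
    have hw := hωj (k + 1) (by omega) (by omega)
    rw [Nat.add_sub_cancel] at hw
    rw [Finset.sum_range_succ, Finset.sum_range_succ _ (k + 1), ← ih', hw]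
    ring

/-- One-dimensional `L²` mass equivalence for piecewise affine functions:
if `v` is the continuous piecewise affine function on the partition
`a = t 0 < t 1 < … < t n = b` with nodal values `v (t j) = y j`, and
`ω j` denotes the width of the `j`-th nodal patch, then
`(1/6) ∑ y_j² ω_j ≤ ∫_a^b v² ≤ (1/2) ∑ y_j² ω_j`. -/
theorem stmt8 (n : ℕ) (hn : 1 ≤ n) (a b : ℝ) (t y : ℕ → ℝ)
    (ht0 : t 0 = a) (htn : t n = b)
    (hmono : ∀ j < n, t j < t (j + 1))
    (v : ℝ → ℝ)
    (hval : ∀ j ≤ n, v (t j) = y j)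
    (haff : ∀ j < n, ∀ s ∈ Set.Icc (t j) (t (j + 1)),
      v s = y j + (y (j + 1) - y j) * (s - t j) / (t (j + 1) - t j))
    (ω : ℕ → ℝ)
    (hω0 : ω 0 = t 1 - t 0) (hωn : ω n = t n - t (n - 1))
    (hωj : ∀ j, 0 < j → j < n → ω j = t (j + 1) - t (j - 1)) :
    (1 / 6) * ∑ j ∈ Finset.range (n + 1), (y j) ^ 2 * ω j ≤ (∫ s in a..b, (v s) ^ 2) ∧
      (∫ s in a..b, (v s) ^ 2) ≤ (1 / 2) * ∑ j ∈ Finset.range (n + 1), (y j) ^ 2 * ω j := by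
  have hcongr : ∀ j < n, Set.EqOn (fun s => (v s) ^ 2)
      (fun s => (y j + (y (j + 1) - y j) * (s - t j) / (t (j + 1) - t j)) ^ 2)
      (Set.uIcc (t j) (t (j + 1))) := by
    intro j hj s hs
    rw [Set.uIcc_of_le (hmono j hj).le] at hs
    simp only [haff j hj s hs]
  have hint : ∀ j < n, IntervalIntegrable (fun s => (v s) ^ 2) MeasureTheory.volume
      (t j) (t (j + 1)) := by
    intro j hj
    have hc : Continuous
        (fun s => (y j + (y (j + 1) - y j) * (s - t j) / (t (j + 1) - t j)) ^ 2) := by fun_prop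
    exact (hc.continuousOn.congr (hcongr j hj)).intervalIntegrable
  have hI : ∫ s in a..b, (v s) ^ 2 = ∑ j ∈ Finset.range n,
      (t (j + 1) - t j) / 3 * (y j ^ 2 + y j * y (j + 1) + y (j + 1) ^ 2) := by
    rw [← ht0, ← htn, ← intervalIntegral.sum_integral_adjacent_intervals hint]
    refine Finset.sum_congr rfl fun j hj => ?_
    have hj' := Finset.mem_range.1 hj
    rw [intervalIntegral.integral_congr (hcongr j hj'), aux_int _ _ _ _ (hmono j hj')]
  have hS : ∑ j ∈ Finset.range (n + 1), (y j) ^ 2 * ω j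
      = ∑ j ∈ Finset.range n, (y j ^ 2 + y (j + 1) ^ 2) * (t (j + 1) - t j) := by
    obtain ⟨k, rfl⟩ : ∃ k, n = k + 1 := ⟨n - 1, by omega⟩
    rw [Finset.sum_range_succ, hωn, Nat.add_sub_cancel]
    exact aux_sum (k + 1) t y ω hω0 hωj k le_rfl
  rw [hI, hS, Finset.mul_sum, Finset.mul_sum]
  constructor
  · refine Finset.sum_le_sum fun j hj => ?_
    have h := hmono j (Finset.mem_range.1 hj)
    nlinarith [mul_nonneg (sub_nonneg.2 h.le) (sq_nonneg (y j + y (j + 1)))]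
  · refine Finset.sum_le_sum fun j hj => ?_
    have h := hmono j (Finset.mem_range.1 hj)
    nlinarith [mul_nonneg (sub_nonneg.2 h.le) (sq_nonneg (y j - y (j + 1)))]
end

section
/- Let R ⊂ ℝ² be a nonempty bounded open convex set. Then there exists a constant C > 0 (depending only on R) such that for every ε ∈ (0, 1/2) and every continuous function v : ℝ² → ℝ one has ∫_{∂R} v(x)² dμ_H¹(x) ≤ C² ε^{-1} ( ∫_R v(x)² dx + ∫_R ∫_R |v(x) − v(y)|² / |x − y|^{3+2ε} dx dy ), where μ_H¹ is the one-dimensional Hausdorff measure on the boundary ∂R and the inequality is understood in [0, ∞] (both sides may be infinite). -/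
open MeasureTheory
open scoped ENNReal NNReal RealInnerProductSpace
abbrev E2 := EuclideanSpace ℝ (Fin 2)

lemma exists_normal (R : Set E2) (hne : R.Nonempty) (ho : IsOpen R) (hc : Convex ℝ R)
    (x : E2) (hx : x ∈ frontier R) :
    ∃ n : E2, ‖n‖ = 1 ∧ ∀ w ∈ closure R, ⟪n, w - x⟫ ≤ 0 := by
  have hxR : x ∉ R := by
    rw [ho.frontier_eq] at hx; exact hx.2
  obtain ⟨f, hf⟩ := geometric_hahn_banach_open_point hc ho hxR
  set m : E2 := (InnerProductSpace.toDual ℝ E2).symm f with hm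
  have hmf : ∀ w, ⟪m, w⟫ = f w := fun w => by
    rw [hm, InnerProductSpace.toDual_symm_apply]
  have hm0 : m ≠ 0 := by
    intro h0
    obtain ⟨a, ha⟩ := hne
    have := hf a ha
    rw [← hmf, ← hmf, h0] at this
    simp at this
  have hcl : ∀ w ∈ closure R, f w ≤ f x := by
    intro w hw
    have : closure R ⊆ {w | f w ≤ f x} :=
      closure_minimal (fun a ha => (hf a ha).le) (isClosed_le f.continuous continuous_const)
    exact this hw
  refine ⟨‖m‖⁻¹ • m, ?_, ?_⟩
  · rw [norm_smul, norm_inv, norm_norm, inv_mul_cancel₀ (norm_ne_zero_iff.2 hm0)]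
  · intro w hw
    rw [real_inner_smul_left, inner_sub_right, hmf, hmf]
    exact mul_nonpos_of_nonneg_of_nonpos (by positivity) (by linarith [hcl w hw])

lemma sphere_meas (p : E2) (ρ : ℝ) (hρ : 0 < ρ) :
    μH[1] (Metric.sphere p ρ) ≤ ENNReal.ofReal (4 * Real.pi * ρ) := by
  set g : ℝ → E2 := fun t => p + ρ • !₂[Real.cos t, Real.sin t] with hg
  have hL : LipschitzOnWith (Real.toNNReal (2 * ρ)) g (Set.Icc (-Real.pi) Real.pi) := by
    apply LipschitzWith.lipschitzOnWith
    apply LipschitzWith.of_dist_le_mul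
    intro a b
    rw [Real.coe_toNNReal _ (by positivity), hg]
    simp only [dist_add_left, dist_smul₀, Real.norm_eq_abs, abs_of_pos hρ]
    rw [mul_comm 2 ρ, mul_assoc]
    gcongr
    rw [EuclideanSpace.dist_eq, Fin.sum_univ_two]
    apply Real.sqrt_le_iff.2 ⟨by positivity, ?_⟩
    have h1 : dist (Real.cos a) (Real.cos b) ≤ dist a b := by
      simpa using Real.lipschitzWith_cos.dist_le_mul a b
    have h2 : dist (Real.sin a) (Real.sin b) ≤ dist a b := by
      simpa using Real.lipschitzWith_sin.dist_le_mul a b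
    simp only [Matrix.cons_val_zero, Matrix.cons_val_one]
    have h3 := pow_le_pow_left₀ dist_nonneg h1 2
    have h4 := pow_le_pow_left₀ dist_nonneg h2 2
    nlinarith [sq_nonneg (dist a b)]
  have hsub : Metric.sphere p ρ ⊆ g '' (Set.Icc (-Real.pi) Real.pi) := by
    intro q hq
    set z : ℂ := ⟨(q - p) 0, (q-p) 1⟩ with hz
    have hzn : ‖z‖ = ρ := by
      rw [mem_sphere_iff_norm, EuclideanSpace.norm_eq, Fin.sum_univ_two] at hq
      rw [← hq, Complex.norm_eq_sqrt_sq_add_sq]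
      simp [hz]
    refine ⟨Complex.arg z, ⟨(Complex.neg_pi_lt_arg z).le, Complex.arg_le_pi z⟩, ?_⟩
    have hz0 : z ≠ 0 := by
      intro h; rw [h] at hzn; simp at hzn; linarith
    have h1 := Complex.cos_arg hz0
    have h2 := Complex.sin_arg z
    rw [hzn] at h1 h2
    ext i
    fin_cases i
    · have hre : z.re = q 0 - p 0 := by simp [hz]
      change p 0 + ρ * Real.cos (Complex.arg z) = q 0
      rw [h1, hre]; field_simp; ring
    · have him : z.im = q 1 - p 1 := by simp [hz]
      change p 1 + ρ * Real.sin (Complex.arg z) = q 1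
      rw [h2, him]; field_simp; ring
  calc μH[1] (Metric.sphere p ρ) ≤ μH[1] (g '' (Set.Icc (-Real.pi) Real.pi)) := measure_mono hsub
    _ ≤ (Real.toNNReal (2 * ρ) : ℝ≥0∞) ^ (1:ℝ) * μH[1] (Set.Icc (-Real.pi) Real.pi) :=
        hL.hausdorffMeasure_image_le zero_le_one
    _ = _ := by
        rw [hausdorffMeasure_real, Real.volume_Icc, ENNReal.rpow_one]
        change ENNReal.ofReal _ * _ = _
        rw [← ENNReal.ofReal_mul (by positivity)]
        congr 1; ring

lemma frontier_meas (R : Set E2) (hne : R.Nonempty) (ho : IsOpen R) (hc : Convex ℝ R)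
    (p : E2) (ρ : ℝ) (hρ : 0 < ρ) :
    μH[1] (frontier R ∩ Metric.ball p ρ) ≤ ENNReal.ofReal (4 * Real.pi * ρ) := by
  have key : ∀ x : E2, ∃ q : E2, x ∈ frontier R ∩ Metric.ball p ρ →
      q ∈ Metric.sphere p ρ ∧ ∀ w ∈ closure R, ⟪q - x, w - x⟫ ≤ 0 := by
    intro x
    by_cases hx : x ∈ frontier R ∩ Metric.ball p ρ
    swap
    · exact ⟨0, fun h => absurd h hx⟩
    obtain ⟨n, hn, hw⟩ := exists_normal R hne ho hc x hx.1
    have hx2 : ‖x - p‖ < ρ := by simpa [dist_eq_norm] using hx.2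
    have hcont : ContinuousOn (fun t : ℝ => ‖x + t • n - p‖) (Set.Icc 0 (2 * ρ)) := by fun_prop
    have h2 : ρ ≤ ‖x + (2 * ρ) • n - p‖ := by
      have : ‖(2 * ρ) • n‖ ≤ ‖x + (2 * ρ) • n - p‖ + ‖x - p‖ := by
        have h := norm_sub_le (x + (2 * ρ) • n - p) (x - p)
        have e : (x + (2 * ρ) • n - p) - (x - p) = (2 * ρ) • n := by abel
        rwa [e] at h
      rw [norm_smul, hn, Real.norm_eq_abs, abs_of_pos (by positivity)] at this
      linarith
    obtain ⟨t, ht, hte⟩ := intermediate_value_Icc (by positivity) hcont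
      (show ρ ∈ Set.Icc _ _ from ⟨by simpa using hx2.le, h2⟩)
    refine ⟨x + t • n, fun _ => ⟨by simpa [dist_eq_norm] using hte, ?_⟩⟩
    intro w hw'
    rw [add_sub_cancel_left, real_inner_smul_left]
    exact mul_nonpos_of_nonneg_of_nonpos ht.1 (hw w hw')
  choose q hq using key
  set S := frontier R ∩ Metric.ball p ρ with hS
  have hanti : ∀ x ∈ S, ∀ y ∈ S, dist x y ≤ dist (q x) (q y) := by
    intro x hx y hy
    have h1 := (hq x hx).2 y (frontier_subset_closure hy.1)
    have h2 := (hq y hy).2 x (frontier_subset_closure hx.1)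
    rw [dist_eq_norm, dist_eq_norm]
    have h3 : ‖x - y‖ ^ 2 ≤ ⟪q x - q y, x - y⟫ := by
      rw [← real_inner_self_eq_norm_sq]
      have e : q x - q y = (q x - x) + (x - y) - (q y - y) := by abel
      have e2 : y - x = -(x - y) := by abel
      rw [e2, inner_neg_right] at h1
      rw [e, inner_sub_left (q x - x + (x - y)), inner_add_left (q x - x)]
      linarith
    have h4 := real_inner_le_norm (q x - q y) (x - y)
    by_contra hcon
    push Not at hcon
    have : 0 < ‖x - y‖ := lt_of_le_of_lt (norm_nonneg _) hcon
    nlinarith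
  have hinj : Set.InjOn q S := by
    intro x hx y hy h
    have := hanti x hx y hy
    rw [h, dist_self] at this
    exact dist_le_zero.1 this
  have hLip : LipschitzOnWith 1 (Function.invFunOn q S) (q '' S) := by
    apply LipschitzOnWith.of_dist_le_mul
    rintro _ ⟨x, hx, rfl⟩ _ ⟨y, hy, rfl⟩
    rw [hinj.leftInvOn_invFunOn hx, hinj.leftInvOn_invFunOn hy]
    simpa using hanti x hx y hy
  have himg : Function.invFunOn q S '' (q '' S) = S := hinj.leftInvOn_invFunOn.image_image
  calc μH[1] S = μH[1] (Function.invFunOn q S '' (q '' S)) := by rw [himg]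
    _ ≤ ((1 : ℝ≥0) : ℝ≥0∞) ^ (1 : ℝ) * μH[1] (q '' S) := hLip.hausdorffMeasure_image_le zero_le_one
    _ = μH[1] (q '' S) := by simp
    _ ≤ μH[1] (Metric.sphere p ρ) := measure_mono (by rintro _ ⟨x, hx, rfl⟩; exact (hq x hx).1)
    _ ≤ _ := sphere_meas p ρ hρ

lemma seq_bound (a : ℕ → ℝ) (l : ℝ) (ha : Filter.Tendsto a Filter.atTop (nhds l)) (ε : ℝ)
    (h0 : 0 < ε) :
    ENNReal.ofReal (l ^ 2) ≤ 2 * ENNReal.ofReal (a 0 ^ 2) + ENNReal.ofReal (2 / ε) *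
      ∑' k, ENNReal.ofReal (((1 / 2 : ℝ) ^ (k + 1)) ^ (-(2 * ε)) * (a k - a (k + 1)) ^ 2) := by
  have hlim : Filter.Tendsto (fun N => ENNReal.ofReal (a N ^ 2)) Filter.atTop
      (nhds (ENNReal.ofReal (l ^ 2))) := ENNReal.tendsto_ofReal (ha.pow 2)
  refine le_of_tendsto hlim (Filter.Eventually.of_forall fun N => ?_)
  set s : ℕ → ℝ := fun k => (1 / 2 : ℝ) ^ (k + 1) with hs
  have hspos : ∀ k, 0 < s k := fun k => by positivity
  set q : ℝ := (1 / 2 : ℝ) ^ (2 * ε) with hqdef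
  have hq0 : 0 < q := by positivity
  have hq1 : q * (1 + ε) ≤ 1 := by
    have : 1 + ε ≤ (2 : ℝ) ^ (2 * ε) := by
      rw [Real.rpow_def_of_pos (by norm_num)]
      have h1 := Real.add_one_le_exp (Real.log 2 * (2 * ε))
      have h2 := Real.log_two_gt_d9
      nlinarith
    calc q * (1 + ε) ≤ q * (2 : ℝ) ^ (2 * ε) := by gcongr
      _ = 1 := by rw [hqdef, ← Real.mul_rpow (by norm_num) (by norm_num)]; norm_num
  have hqs : ∀ k, s k ^ (2 * ε) = q ^ (k + 1) := by
    intro k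
    change ((1 / 2 : ℝ) ^ (k + 1)) ^ (2 * ε) = _
    rw [hqdef, ← Real.rpow_natCast, ← Real.rpow_natCast, ← Real.rpow_mul (by norm_num),
      ← Real.rpow_mul (by norm_num), mul_comm]
  have hsum : ∀ N, ∑ k ∈ Finset.range N, s k ^ (2 * ε) ≤ (1 - q ^ N) / ε := by
    intro N
    induction N with
    | zero => simp
    | succ n ih =>
      rw [Finset.sum_range_succ, hqs]
      have hqn : 0 < q ^ n := by positivity
      rw [le_div_iff₀ h0] at ih ⊢
      rw [add_mul, pow_succ]
      nlinarith
  have hsum' : ∑ k ∈ Finset.range N, s k ^ (2 * ε) ≤ 1 / ε := by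
    refine (hsum N).trans ?_
    gcongr
    have : 0 < q ^ N := by positivity
    linarith
  set d : ℕ → ℝ := fun k => s k ^ (-(2 * ε)) * (a k - a (k + 1)) ^ 2 with hd
  have hdn : ∀ k, 0 ≤ d k := fun k => by have := hspos k; positivity
  have hCS : (∑ k ∈ Finset.range N, (a k - a (k + 1))) ^ 2 ≤
      (∑ k ∈ Finset.range N, s k ^ (2 * ε)) * ∑ k ∈ Finset.range N, d k := by
    apply Finset.sum_sq_le_sum_mul_sum_of_sq_le_mul
    · intro i _; have := hspos i; positivity
    · intro i _; exact hdn i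
    · intro i _
      apply le_of_eq
      rw [hd]
      simp only
      rw [← mul_assoc, ← Real.rpow_add (hspos i)]
      simp
  have htel : ∑ k ∈ Finset.range N, (a k - a (k + 1)) = a 0 - a N := Finset.sum_range_sub' a N
  rw [htel] at hCS
  have hD : 0 ≤ ∑ k ∈ Finset.range N, d k := Finset.sum_nonneg fun i _ => hdn i
  have hreal : a N ^ 2 ≤ 2 * a 0 ^ 2 + (2 / ε) * ∑ k ∈ Finset.range N, d k := by
    have h1 : (a 0 - a N) ^ 2 ≤ 1 / ε * ∑ k ∈ Finset.range N, d k :=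
      hCS.trans (by gcongr)
    have h2 : a N ^ 2 ≤ 2 * a 0 ^ 2 + 2 * (a 0 - a N) ^ 2 := by
      nlinarith [sq_nonneg (2 * a 0 - a N)]
    calc a N ^ 2 ≤ 2 * a 0 ^ 2 + 2 * (1 / ε * ∑ k ∈ Finset.range N, d k) := by linarith
      _ = _ := by ring
  calc ENNReal.ofReal (a N ^ 2) ≤ ENNReal.ofReal (2 * a 0 ^ 2 + (2 / ε) * ∑ k ∈ Finset.range N, d k) :=
        ENNReal.ofReal_le_ofReal hreal
    _ = 2 * ENNReal.ofReal (a 0 ^ 2) + ENNReal.ofReal (2 / ε) *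
          ∑ k ∈ Finset.range N, ENNReal.ofReal (d k) := by
        rw [ENNReal.ofReal_add (by positivity) (by positivity), ENNReal.ofReal_mul (by norm_num),
          ENNReal.ofReal_mul (by positivity), ENNReal.ofReal_sum_of_nonneg (fun i _ => hdn i)]
        simp
    _ ≤ _ := by
        gcongr
        exact ENNReal.sum_le_tsum _

lemma jensen_sq {α : Type*} [MeasurableSpace α] (μ : Measure α) [IsProbabilityMeasure μ]
    (f : α → ℝ) (hf : AEStronglyMeasurable f μ) :
    ENNReal.ofReal ((∫ x, f x ∂μ) ^ 2) ≤ ∫⁻ x, ENNReal.ofReal (f x ^ 2) ∂μ := by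
  by_cases h : MemLp f 2 μ
  · have hi := h.integrable_sq
    rw [← ofReal_integral_eq_lintegral_ofReal hi (Filter.Eventually.of_forall fun x => sq_nonneg _)]
    apply ENNReal.ofReal_le_ofReal
    have := ProbabilityTheory.variance_nonneg f μ
    rw [ProbabilityTheory.variance_eq_sub h] at this
    simpa using this
  · have : ∫⁻ x, ENNReal.ofReal (f x ^ 2) ∂μ = ⊤ := by
      by_contra hne
      apply h
      rw [memLp_two_iff_integrable_sq hf]
      refine ⟨hf.pow 2, ?_⟩
      rw [hasFiniteIntegral_iff_ofReal (Filter.Eventually.of_forall fun x => sq_nonneg _)]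
      exact lt_top_iff_ne_top.2 hne
    rw [this]; exact le_top

lemma chvar (u c : E2) (s r : ℝ) (hs : 0 < s) (f : E2 → ℝ≥0∞) :
    ∫⁻ b in Metric.ball c r, f (u + s • b) =
      ENNReal.ofReal ((s ^ 2)⁻¹) * ∫⁻ y in Metric.ball (u + s • c) (s * r), f y := by
  have hpre : (fun b : E2 => u + s • b) ⁻¹' (Metric.ball (u + s • c) (s * r)) = Metric.ball c r := by
    ext b
    simp [dist_smul₀, abs_of_pos hs, hs]
  have hemb : MeasurableEmbedding (fun b : E2 => u + s • b) :=
    ((Homeomorph.smulOfNeZero s hs.ne').trans (Homeomorph.addLeft u)).measurableEmbedding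
  have hmap : Measure.map (fun b : E2 => u + s • b) volume = ENNReal.ofReal ((s ^ 2)⁻¹) • volume := by
    have h1 : Measure.map (fun b : E2 => s • b) volume = ENNReal.ofReal ((s ^ 2)⁻¹) • (volume : Measure E2) := by
      have := Measure.map_addHaar_smul (volume : Measure E2) hs.ne'
      rw [finrank_euclideanSpace_fin, abs_of_pos (by positivity)] at this
      exact this
    have h2 : (fun b : E2 => u + s • b) = (fun b => u + b) ∘ (fun b : E2 => s • b) := rfl
    rw [h2, ← Measure.map_map (by fun_prop) (by fun_prop), h1, Measure.map_smul, map_add_left_eq_self]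
  rw [← hpre, ← hemb.lintegral_map, ← hemb.restrict_map, hmap, Measure.restrict_smul, lintegral_smul_measure, smul_eq_mul]

lemma ball_repr (x c y : E2) (s ρ : ℝ) (hs : 0 < s)
    (hy : y ∈ Metric.ball ((1 - s) • x + s • c) (s * ρ)) :
    ∃ b ∈ Metric.ball c ρ, y = (1 - s) • x + s • b := by
  refine ⟨s⁻¹ • (y - (1 - s) • x), ?_, ?_⟩
  · rw [Metric.mem_ball, dist_eq_norm] at hy ⊢
    have e : y - ((1 - s) • x + s • c) = s • (s⁻¹ • (y - (1 - s) • x) - c) := by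
      rw [smul_sub, smul_smul, mul_inv_cancel₀ hs.ne', one_smul]; abel
    rw [e, norm_smul, Real.norm_eq_abs, abs_of_pos hs] at hy
    exact lt_of_mul_lt_mul_left hy hs.le
  · rw [smul_smul, mul_inv_cancel₀ hs.ne', one_smul]; abel

lemma combo_mem (R : Set E2) (ho : IsOpen R) (hc : Convex ℝ R) (x b : E2) (hx : x ∈ frontier R)
    (hb : b ∈ R) (s : ℝ) (hs : 0 < s) (hs1 : s ≤ 1) : (1 - s) • x + s • b ∈ R := by
  have := hc.combo_closure_interior_mem_interior (frontier_subset_closure hx)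
    (by rwa [ho.interior_eq]) (show 0 ≤ 1 - s by linarith) hs (by ring)
  rwa [ho.interior_eq] at this

lemma layer_disj (R : Set E2) (hne : R.Nonempty) (ho : IsOpen R) (hc : Convex ℝ R)
    (c : E2) (r : ℝ) (hr : 0 < r) (hcr : Metric.closedBall c r ⊆ R)
    (x x' b b' : E2) (hx : x ∈ frontier R) (hx' : x' ∈ frontier R)
    (hb : b ∈ Metric.ball c (r / 4)) (hb' : b' ∈ Metric.ball c (r / 4))
    (s t : ℝ) (hs : 0 < s) (ht : 0 < t) (hs1 : s ≤ 1) (hts : t ≤ s / 2)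
    (h : (1 - s) • x + s • b = (1 - t) • x' + t • b') : False := by
  obtain ⟨n, hn, hw⟩ := exists_normal R hne ho hc x' hx'
  have h1 := hw x (frontier_subset_closure hx)
  have h2 : ⟪n, c + r • n - x'⟫ ≤ 0 := by
    apply hw _ (subset_closure (hcr _))
    simp [norm_smul, hn, abs_of_pos hr]
  have h3 : |⟪n, b - c⟫| ≤ r / 4 := by
    refine (abs_real_inner_le_norm _ _).trans ?_
    rw [hn, one_mul]
    exact (mem_ball_iff_norm.1 hb).le
  have h4 : |⟪n, b' - c⟫| ≤ r / 4 := by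
    refine (abs_real_inner_le_norm _ _).trans ?_
    rw [hn, one_mul]
    exact (mem_ball_iff_norm.1 hb').le
  have h5 := congrArg (fun w => ⟪n, w⟫) h
  have hnn : ⟪n, n⟫ = 1 := by rw [real_inner_self_eq_norm_sq, hn]; norm_num
  simp only [inner_add_right, inner_sub_right, real_inner_smul_right, hnn] at h1 h2 h3 h4 h5
  rw [abs_le] at h3 h4
  set X := ⟪n, x⟫
  set X' := ⟪n, x'⟫
  set B := ⟪n, b⟫
  set B' := ⟪n, b'⟫
  set Cc := ⟪n, c⟫
  have e : (1 - s) * (X' - X) + s * (X' - B) = t * (X' - B') := by linarith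
  have i1 : 0 ≤ (1 - s) * (X' - X) := mul_nonneg (by linarith) (by linarith)
  have i2 : s * (3 / 4 * (X' - Cc)) ≤ s * (X' - B) := by gcongr; linarith
  have i3 : t * (X' - B') ≤ t * (5 / 4 * (X' - Cc)) := by gcongr; linarith
  have i4 : t * (5 / 4 * (X' - Cc)) ≤ s / 2 * (5 / 4 * (X' - Cc)) := by
    gcongr; linarith
  have i5 : 0 < s * (X' - Cc) := mul_pos hs (by linarith)
  linarith

lemma int_v (v : E2 → ℝ) (hv : Continuous v) (u c : E2) (s ρ : ℝ) (m : ℝ≥0∞) (hm : m ≠ ⊤) :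
    Integrable (fun b => v (u + s • b)) (m • volume.restrict (Metric.ball c ρ)) := by
  apply Integrable.smul_measure _ hm
  have : IntegrableOn (fun b => v (u + s • b)) (Metric.closedBall c ρ) :=
    ContinuousOn.integrableOn_compact (isCompact_closedBall c ρ) (by fun_prop)
  exact this.mono_set Metric.ball_subset_closedBall

lemma pair_bound (v : E2 → ℝ) (hv : Continuous v) (u u' c : E2) (s s' ρ : ℝ)
    (hs : 0 < s) (hs' : 0 < s') (m : ℝ≥0∞) (hm : m ≠ ⊤)
    (hprob : IsProbabilityMeasure (m • volume.restrict (Metric.ball c ρ))) :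
    ENNReal.ofReal (((∫ b, v (u + s • b) ∂(m • volume.restrict (Metric.ball c ρ))) -
        ∫ b, v (u' + s' • b) ∂(m • volume.restrict (Metric.ball c ρ))) ^ 2) ≤
      m * (ENNReal.ofReal ((s ^ 2)⁻¹) * (m * (ENNReal.ofReal ((s' ^ 2)⁻¹) *
        ∫⁻ y in Metric.ball (u + s • c) (s * ρ), ∫⁻ z in Metric.ball (u' + s' • c) (s' * ρ),
          ENNReal.ofReal ((v y - v z) ^ 2)))) := by
  set ν := m • volume.restrict (Metric.ball c ρ) with hν
  set a' := ∫ b, v (u' + s' • b) ∂ν with ha'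
  have i1 : Integrable (fun b => v (u + s • b)) ν := int_v v hv u c s ρ m hm
  have i2 : Integrable (fun b => v (u' + s' • b)) ν := int_v v hv u' c s' ρ m hm
  have hk : ∀ f : E2 → ℝ≥0∞, ∫⁻ b, f b ∂ν = m * ∫⁻ b in Metric.ball c ρ, f b := by
    intro f
    rw [hν, lintegral_smul_measure, smul_eq_mul]
  have e1 : (∫ b, v (u + s • b) ∂ν) - a' = ∫ b, (v (u + s • b) - a') ∂ν := by
    rw [integral_sub i1 (integrable_const _)]; simp
  have e2 : ∀ t : ℝ, t - a' = ∫ b, (t - v (u' + s' • b)) ∂ν := by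
    intro t
    rw [integral_sub (integrable_const _) i2]; simp [ha']
  have j2 : ∀ t : ℝ, ENNReal.ofReal ((t - a') ^ 2) ≤ m * (ENNReal.ofReal ((s' ^ 2)⁻¹) *
      ∫⁻ z in Metric.ball (u' + s' • c) (s' * ρ), ENNReal.ofReal ((t - v z) ^ 2)) := by
    intro t
    rw [e2 t]
    refine (jensen_sq ν (fun b => t - v (u' + s' • b))
      ((integrable_const _).sub i2).aestronglyMeasurable).trans ?_
    rw [hk, chvar u' c s' ρ hs' (fun z => ENNReal.ofReal ((t - v z) ^ 2))]
  rw [e1]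
  refine (jensen_sq ν (fun b => v (u + s • b) - a')
    (i1.sub (integrable_const _)).aestronglyMeasurable).trans ?_
  rw [hk, chvar u c s ρ hs (fun y => ENNReal.ofReal ((v y - a') ^ 2))]
  gcongr
  have hmeas : Measurable (fun y => ∫⁻ z in Metric.ball (u' + s' • c) (s' * ρ),
      ENNReal.ofReal ((v y - v z) ^ 2)) := by
    apply Measurable.lintegral_prod_right'
      (f := fun p : E2 × E2 => ENNReal.ofReal ((v p.1 - v p.2) ^ 2))
    have : Continuous (fun p : E2 × E2 => (v p.1 - v p.2) ^ 2) := by fun_prop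
    exact this.measurable.ennreal_ofReal
  rw [← lintegral_const_mul _ hmeas, ← lintegral_const_mul _ (hmeas.const_mul _)]
  exact lintegral_mono fun y => j2 (v y)

lemma avg_tendsto (R : Set E2) (ho : IsOpen R) (hc : Convex ℝ R) (hb : Bornology.IsBounded R)
    (v : E2 → ℝ) (hv : Continuous v) (x c : E2) (hx : x ∈ frontier R) (ρ : ℝ)
    (hsub : Metric.ball c ρ ⊆ R) (m : ℝ≥0∞) (hm : m ≠ ⊤)
    (hprob : IsProbabilityMeasure (m • volume.restrict (Metric.ball c ρ))) :
    Filter.Tendsto (fun k : ℕ => ∫ b, v ((1 - (1 / 2 : ℝ) ^ (k + 1)) • x + ((1 / 2 : ℝ) ^ (k + 1)) • b)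
      ∂(m • volume.restrict (Metric.ball c ρ))) Filter.atTop (nhds (v x)) := by
  set ν := m • volume.restrict (Metric.ball c ρ) with hν
  have hK : IsCompact (closure R) := hb.isCompact_closure
  obtain ⟨M, hM⟩ := hK.exists_bound_of_continuousOn hv.continuousOn
  have hlim : v x = ∫ _b, v x ∂ν := by simp
  rw [hlim]
  apply tendsto_integral_of_dominated_convergence (fun _ => M)
  · intro k
    exact (int_v v hv _ c _ ρ m hm).aestronglyMeasurable
  · exact integrable_const _
  · intro k
    have : ∀ᵐ b ∂(volume.restrict (Metric.ball c ρ)), b ∈ Metric.ball c ρ :=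
      ae_restrict_mem measurableSet_ball
    refine Measure.ae_smul_measure (this.mono fun b hb' => ?_) m
    apply hM
    apply subset_closure
    exact combo_mem R ho hc x b hx (hsub hb') _ (by positivity)
      (pow_le_one₀ (by norm_num) (by norm_num))
  · refine Filter.Eventually.of_forall fun b => ?_
    have h0 : Filter.Tendsto (fun k : ℕ => (1 / 2 : ℝ) ^ (k + 1)) Filter.atTop (nhds 0) :=
      (tendsto_pow_atTop_nhds_zero_of_lt_one (by norm_num) (by norm_num)).comp
        (Filter.tendsto_add_atTop_nat 1)
    have hcont : Continuous (fun t : ℝ => v ((1 - t) • x + t • b)) := by fun_prop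
    have h1 := (hcont.tendsto 0).comp h0
    have h2 : v ((1 - (0 : ℝ)) • x + (0 : ℝ) • b) = v x := by simp
    rw [h2] at h1
    exact h1

lemma layer_int (R : Set E2) (hne : R.Nonempty) (ho : IsOpen R) (hc : Convex ℝ R)
    (hfin : μH[1] (frontier R) ≠ ⊤)
    (c : E2) (r : ℝ) (hr : 0 < r) (s : ℝ) (hs : 0 < s) (hs1 : s ≤ 1 / 2)
    (Lk : Set E2) (hLm : MeasurableSet Lk)
    (hL : ∀ x ∈ frontier R, Metric.ball ((1 - s) • x + s • c) (s * (r / 4)) ⊆ Lk)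
    (g : E2 → ℝ≥0∞) (hg : Measurable g) :
    Measurable (fun x => ∫⁻ y in Metric.ball ((1 - s) • x + s • c) (s * (r / 4)), g y) ∧
    ∫⁻ x in frontier R, (∫⁻ y in Metric.ball ((1 - s) • x + s • c) (s * (r / 4)), g y) ∂(μH[1]) ≤
      ENNReal.ofReal (2 * Real.pi * r * s) * ∫⁻ y in Lk, g y := by
  set T : Set (E2 × E2) := {p | dist p.2 ((1 - s) • p.1 + s • c) < s * (r / 4)} with hT
  have hTo : IsOpen T := by
    apply isOpen_lt <;> fun_prop
  set f : E2 × E2 → ℝ≥0∞ := T.indicator (fun p => g p.2) with hf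
  have hfm : Measurable f := (hg.comp measurable_snd).indicator hTo.measurableSet
  have hfx : ∀ x, ∫⁻ y in Metric.ball ((1 - s) • x + s • c) (s * (r / 4)), g y = ∫⁻ y, f (x, y) := by
    intro x
    rw [← lintegral_indicator measurableSet_ball]
    rfl
  refine ⟨?_, ?_⟩
  · simp_rw [hfx]
    exact hfm.lintegral_prod_right'
  · simp_rw [hfx]
    have : IsFiniteMeasure ((μH[1] : Measure E2).restrict (frontier R)) :=
      ⟨by rw [Measure.restrict_apply_univ]; exact lt_top_iff_ne_top.2 hfin⟩
    rw [lintegral_lintegral_swap (f := fun x y => f (x, y)) hfm.aemeasurable,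
      ← lintegral_indicator hLm, ← lintegral_const_mul _ (hg.indicator hLm)]
    apply lintegral_mono
    intro y
    set Ty : Set E2 := {x | (x, y) ∈ T} with hTy
    have hTyo : IsOpen Ty := hTo.preimage (by fun_prop : Continuous fun x : E2 => (x, y))
    have hfy : ∀ x, f (x, y) = Ty.indicator (fun _ => g y) x := by
      intro x; rfl
    change ∫⁻ x in frontier R, f (x, y) ∂(μH[1]) ≤ ENNReal.ofReal (2 * Real.pi * r * s) * Lk.indicator g y
    simp_rw [hfy]
    rw [lintegral_indicator hTyo.measurableSet, lintegral_const,
      Measure.restrict_apply_univ, Measure.restrict_apply hTyo.measurableSet]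
    by_cases hy : y ∈ Lk
    · rw [Set.indicator_of_mem hy, mul_comm]
      gcongr
      have hsub : Ty ∩ frontier R ⊆
          frontier R ∩ Metric.ball ((1 - s)⁻¹ • (y - s • c)) (s * r / 2) := by
        rintro x ⟨hx, hxR⟩
        refine ⟨hxR, ?_⟩
        have hx' : dist y ((1 - s) • x + s • c) < s * (r / 4) := hx
        have h1s : 0 < 1 - s := by linarith
        rw [Metric.mem_ball, dist_comm, dist_eq_norm]
        rw [dist_eq_norm] at hx'
        have e : y - ((1 - s) • x + s • c) = (1 - s) • ((1 - s)⁻¹ • (y - s • c) - x) := by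
          rw [smul_sub, smul_smul, mul_inv_cancel₀ h1s.ne', one_smul]; abel
        rw [e, norm_smul, Real.norm_eq_abs, abs_of_pos h1s] at hx'
        have := norm_nonneg ((1 - s)⁻¹ • (y - s • c) - x)
        nlinarith
      refine (measure_mono hsub).trans ((frontier_meas R hne ho hc _ _ (by positivity)).trans ?_)
      apply ENNReal.ofReal_le_ofReal
      apply le_of_eq; ring
    · have : Ty ∩ frontier R = ∅ := by
        ext x
        simp only [Set.mem_inter_iff, Set.mem_empty_iff_false, iff_false, not_and]
        intro hx hxR
        exact hy (hL x hxR hx)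
      rw [this]; simp

set_option maxHeartbeats 2000000 in
theorem stmt9 (R : Set (EuclideanSpace ℝ (Fin 2)))
    (hR_ne : R.Nonempty) (hR_open : IsOpen R) (hR_conv : Convex ℝ R)
    (hR_bdd : Bornology.IsBounded R) :
    ∃ C : ℝ, 0 < C ∧ ∀ ε : ℝ, ε ∈ Set.Ioo (0 : ℝ) (1 / 2) →
      ∀ v : EuclideanSpace ℝ (Fin 2) → ℝ, Continuous v →
        (∫⁻ x in frontier R, ENNReal.ofReal ((v x) ^ 2) ∂(μH[1])) ≤
          ENNReal.ofReal (C ^ 2 / ε) *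
            ((∫⁻ x in R, ENNReal.ofReal ((v x) ^ 2)) +
              ∫⁻ x in R, ∫⁻ y in R,
                ENNReal.ofReal (|v x - v y| ^ 2 / ‖x - y‖ ^ ((3 : ℝ) + 2 * ε))) := by
  obtain ⟨c, hcR⟩ := hR_ne
  have hne : R.Nonempty := ⟨c, hcR⟩
  obtain ⟨r, hr, hball⟩ := Metric.nhds_basis_closedBall.mem_iff.1 (hR_open.mem_nhds hcR)
  -- diameter
  have hclb : Bornology.IsBounded (closure R) := hR_bdd.closure
  obtain ⟨D₀, hD₀⟩ := (Metric.isBounded_iff.1 hclb)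
  set D : ℝ := 2 * max D₀ 1 with hD
  have hD1 : 1 ≤ D := by have := le_max_right D₀ 1; linarith
  have hdist : ∀ x ∈ closure R, ∀ y ∈ closure R, ‖x - y‖ ≤ D / 2 := by
    intro x hx y hy
    have := hD₀ hx hy
    rw [dist_eq_norm] at this
    have h2 := le_max_left D₀ 1
    linarith
  -- finiteness of the boundary measure
  have hfin : μH[1] (frontier R) ≠ ⊤ := by
    have hsub : frontier R ⊆ frontier R ∩ Metric.ball c D := by
      intro x hx
      refine ⟨hx, ?_⟩
      rw [mem_ball_iff_norm]
      have := hdist x (frontier_subset_closure hx) c (subset_closure hcR)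
      linarith
    exact ne_top_of_le_ne_top ENNReal.ofReal_ne_top
      ((measure_mono hsub).trans (frontier_meas R hne hR_open hR_conv c D (by linarith)))
  set H := μH[1] (frontier R) with hH
  have hr4 : 0 < r / 4 := by positivity
  have hballR : Metric.ball c (r / 4) ⊆ R := fun y hy => hball (by
    rw [Metric.mem_closedBall]; have := Metric.mem_ball.1 hy; linarith)
  set V := volume (Metric.ball c (r / 4)) with hV
  have hV0 : V ≠ 0 := (Metric.measure_ball_pos _ _ hr4).ne'
  have hVt : V ≠ ⊤ := measure_ball_lt_top.ne
  set m : ℝ≥0∞ := V⁻¹ with hm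
  have hmt : m ≠ ⊤ := ENNReal.inv_ne_top.2 hV0
  have hprob : IsProbabilityMeasure (m • volume.restrict (Metric.ball c (r / 4))) := by
    refine ⟨?_⟩
    rw [Measure.smul_apply, Measure.restrict_apply_univ, smul_eq_mul]
    exact ENNReal.inv_mul_cancel hV0 hVt
  set s : ℕ → ℝ := fun k => (1 / 2 : ℝ) ^ (k + 1) with hsdef
  have hspos : ∀ k, 0 < s k := fun k => by positivity
  have hs_half : ∀ k, s k ≤ 1 / 2 := by
    intro k
    have h : (1 / 2 : ℝ) ^ k ≤ 1 := pow_le_one₀ (by norm_num) (by norm_num)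
    rw [hsdef]; simp only; rw [pow_succ]; linarith
  have hs_succ : ∀ k, s (k + 1) = s k / 2 := by
    intro k; rw [hsdef]; simp only; rw [pow_succ _ (k + 1)]; ring
  have hs_lt : ∀ i j, i < j → s j ≤ s i / 2 := by
    intro i j hij
    rw [← hs_succ]
    exact pow_le_pow_of_le_one (by norm_num) (by norm_num) (by omega)
  set A : ℕ → E2 → Set E2 := fun k x =>
    Metric.ball ((1 - s k) • x + s k • c) (s k * (r / 4)) with hA
  have hArep : ∀ k, ∀ x, ∀ y ∈ A k x, ∃ b ∈ Metric.ball c (r / 4),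
      y = (1 - s k) • x + s k • b := fun k x y hy => ball_repr x c y (s k) (r / 4) (hspos k) hy
  have hAR : ∀ k, ∀ x ∈ frontier R, A k x ⊆ R := by
    intro k x hx y hy
    obtain ⟨b, hb, rfl⟩ := hArep k x y hy
    exact combo_mem R hR_open hR_conv x b hx (hballR hb) _ (hspos k) (by linarith [hs_half k])
  have hAx : ∀ k, ∀ x ∈ frontier R, ∀ y ∈ A k x, ‖y - x‖ ≤ s k * (D / 2) := by
    intro k x hx y hy
    obtain ⟨b, hb, rfl⟩ := hArep k x y hy
    have e : (1 - s k) • x + s k • b - x = s k • (b - x) := by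
      rw [sub_smul, one_smul, smul_sub]; abel
    rw [e, norm_smul, Real.norm_eq_abs, abs_of_pos (hspos k)]
    have := hdist b (subset_closure (hballR hb)) x (frontier_subset_closure hx)
    have := hspos k
    gcongr
  have hAA : ∀ k, ∀ x ∈ frontier R, ∀ y ∈ A k x, ∀ z ∈ A (k + 1) x, ‖y - z‖ ≤ D * s k := by
    intro k x hx y hy z hz
    have h1 := hAx k x hx y hy
    have h2 := hAx (k + 1) x hx z hz
    rw [hs_succ] at h2
    have h3 : ‖y - z‖ ≤ ‖y - x‖ + ‖z - x‖ := by
      have := norm_sub_le (y - x) (z - x)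
      rwa [sub_sub_sub_cancel_right] at this
    have := mul_pos (hspos k) (show 0 < D by linarith)
    linarith
  -- layers
  set Lk : ℕ → Set E2 := fun k => ⋃ x ∈ frontier R, A k x with hLk
  have hLo : ∀ k, IsOpen (Lk k) := fun k =>
    isOpen_biUnion fun x _ => Metric.isOpen_ball
  have hLR : ∀ k, Lk k ⊆ R := fun k => Set.iUnion₂_subset fun x hx => hAR k x hx
  have hLlt : ∀ i j, i < j → Disjoint (Lk i) (Lk j) := by
    intro i j hij
    rw [Set.disjoint_left]
    intro y hy hy'
    simp only [hLk, Set.mem_iUnion] at hy hy'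
    obtain ⟨x, hx, hyx⟩ := hy
    obtain ⟨x', hx', hyx'⟩ := hy'
    obtain ⟨b, hb, e⟩ := hArep i x y hyx
    obtain ⟨b', hb', e'⟩ := hArep j x' y hyx'
    exact layer_disj R hne hR_open hR_conv c r hr hball x x' b b' hx hx' hb hb' (s i) (s j)
      (hspos i) (hspos j) (by linarith [hs_half i]) (hs_lt i j hij) (e.symm.trans e')
  have hLd : Pairwise (Function.onFun Disjoint Lk) := by
    intro i j hij
    rcases lt_or_gt_of_ne hij with h | h
    · exact hLlt i j h
    · exact (hLlt j i h).symm
  -- constants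
  set C1 : ℝ≥0∞ := m * ENNReal.ofReal 4 with hC1
  set C2 : ℝ≥0∞ := m * m * ENNReal.ofReal (4 * D ^ 4) with hC2
  set K : ℝ≥0∞ := 2 * C1 * H + 2 * C2 * ENNReal.ofReal (2 * Real.pi * r) with hK
  have hC1t : C1 ≠ ⊤ := ENNReal.mul_ne_top hmt ENNReal.ofReal_ne_top
  have hC2t : C2 ≠ ⊤ := ENNReal.mul_ne_top (ENNReal.mul_ne_top hmt hmt) ENNReal.ofReal_ne_top
  have hKt : K ≠ ⊤ := ENNReal.add_ne_top.2
    ⟨ENNReal.mul_ne_top (ENNReal.mul_ne_top (by norm_num) hC1t) hfin,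
     ENNReal.mul_ne_top (ENNReal.mul_ne_top (by norm_num) hC2t) ENNReal.ofReal_ne_top⟩
  refine ⟨Real.sqrt (K.toReal + 1), Real.sqrt_pos.2 (by positivity), ?_⟩
  rintro ε ⟨hε0, hε1⟩ v hv
  rw [Real.sq_sqrt (by positivity)]
  set I1 := ∫⁻ x in R, ENNReal.ofReal ((v x) ^ 2) with hI1
  set F : E2 → E2 → ℝ≥0∞ := fun x y =>
    ENNReal.ofReal (|v x - v y| ^ 2 / ‖x - y‖ ^ ((3 : ℝ) + 2 * ε)) with hF
  have hFm : Measurable (fun p : E2 × E2 => F p.1 p.2) := by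
    rw [hF]
    apply Measurable.ennreal_ofReal
    have h1 : Measurable v := hv.measurable
    fun_prop
  set g : E2 → ℝ≥0∞ := fun x => ∫⁻ y in R, F x y with hg
  have hgm : Measurable g := hFm.lintegral_prod_right'
  change _ ≤ _ * (I1 + ∫⁻ x in R, g x)
  set a : ℕ → E2 → ℝ := fun k x => ∫ b, v ((1 - s k) • x + s k • b)
    ∂(m • volume.restrict (Metric.ball c (r / 4))) with ha
  -- pointwise estimates
  have hp0 : ∀ x ∈ frontier R, ENNReal.ofReal (a 0 x ^ 2) ≤ C1 * I1 := by
    intro x hx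
    refine (jensen_sq _ _ (int_v v hv _ c _ (r / 4) m hmt).aestronglyMeasurable).trans ?_
    rw [lintegral_smul_measure, smul_eq_mul,
      chvar ((1 - s 0) • x) c (s 0) (r / 4) (hspos 0) (fun y => ENNReal.ofReal (v y ^ 2)), hC1, mul_assoc]
    gcongr
    · rw [hsdef]; norm_num
    · exact lintegral_mono_set (hAR 0 x hx)
  have hpk : ∀ k, ∀ x ∈ frontier R,
      ENNReal.ofReal (s k ^ (-(2 * ε)) * (a k x - a (k + 1) x) ^ 2) ≤
        C2 * (ENNReal.ofReal ((s k)⁻¹) * ∫⁻ y in A k x, g y) := by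
    intro k x hx
    have hsk := hspos k
    have hsk' := hspos (k + 1)
    have h1 := pair_bound v hv ((1 - s k) • x) ((1 - s (k + 1)) • x) c (s k) (s (k + 1)) (r / 4)
      hsk hsk' m hmt hprob
    have h2 : ∫⁻ y in A k x, ∫⁻ z in A (k + 1) x, ENNReal.ofReal ((v y - v z) ^ 2) ≤
        ENNReal.ofReal (D ^ 4 * (s k) ^ (3 + 2 * ε)) * ∫⁻ y in A k x, g y := by
      rw [← lintegral_const_mul _ hgm]
      apply setLIntegral_mono (hgm.const_mul _)
      intro y hy
      have hFy : Measurable (F y) := by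
        have h9 := hFm.comp (measurable_prodMk_left (x := y))
        exact h9
      calc ∫⁻ z in A (k + 1) x, ENNReal.ofReal ((v y - v z) ^ 2)
          ≤ ∫⁻ z in A (k + 1) x, ENNReal.ofReal (D ^ 4 * (s k) ^ (3 + 2 * ε)) * F y z := by
            apply setLIntegral_mono (hFy.const_mul _)
            intro z hz
            rw [hF]
            simp only
            rw [← ENNReal.ofReal_mul (by positivity)]
            apply ENNReal.ofReal_le_ofReal
            rw [sq_abs]
            by_cases hyz : y = z
            · simp [hyz]
            have hpos : 0 < ‖y - z‖ := norm_pos_iff.2 (sub_ne_zero.2 hyz)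
            have hle : ‖y - z‖ ^ ((3 : ℝ) + 2 * ε) ≤ D ^ 4 * (s k) ^ (3 + 2 * ε) := by
              calc ‖y - z‖ ^ ((3 : ℝ) + 2 * ε) ≤ (D * s k) ^ ((3 : ℝ) + 2 * ε) :=
                    Real.rpow_le_rpow hpos.le (hAA k x hx y hy z hz) (by linarith)
                _ = D ^ ((3 : ℝ) + 2 * ε) * (s k) ^ (3 + 2 * ε) :=
                    Real.mul_rpow (by linarith) hsk.le
                _ ≤ D ^ (4 : ℝ) * (s k) ^ (3 + 2 * ε) := by
                    gcongr
                    linarith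
                _ = _ := by norm_cast
            have hpp : 0 < ‖y - z‖ ^ ((3 : ℝ) + 2 * ε) := Real.rpow_pos_of_pos hpos _
            rw [mul_div_assoc', le_div_iff₀ hpp, mul_comm]
            gcongr
        _ = ENNReal.ofReal (D ^ 4 * (s k) ^ (3 + 2 * ε)) * ∫⁻ z in A (k + 1) x, F y z :=
            lintegral_const_mul _ hFy
        _ ≤ ENNReal.ofReal (D ^ 4 * (s k) ^ (3 + 2 * ε)) * g y := by
            gcongr
            exact lintegral_mono_set (hAR (k + 1) x hx)
    have hcoef : s k ^ (-(2 * ε)) * ((s k ^ 2)⁻¹ * ((s (k + 1) ^ 2)⁻¹ * (D ^ 4 * (s k) ^ (3 + 2 * ε))))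
        = 4 * D ^ 4 * (s k)⁻¹ := by
      rw [hs_succ, Real.rpow_add hsk, Real.rpow_neg hsk.le]
      have : 0 < s k ^ (2 * ε) := by positivity
      have h3 : s k ^ (3 : ℝ) = s k ^ 3 := by norm_cast
      rw [h3]
      field_simp
      norm_num
    rw [ENNReal.ofReal_mul (by positivity)]
    calc _ ≤ ENNReal.ofReal (s k ^ (-(2 * ε))) * (m * (ENNReal.ofReal ((s k ^ 2)⁻¹) * (m *
            (ENNReal.ofReal ((s (k + 1) ^ 2)⁻¹) *
            (ENNReal.ofReal (D ^ 4 * (s k) ^ (3 + 2 * ε)) * ∫⁻ y in A k x, g y))))) := by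
          gcongr
          refine h1.trans ?_
          gcongr
      _ = m * m * (ENNReal.ofReal (s k ^ (-(2 * ε))) * (ENNReal.ofReal ((s k ^ 2)⁻¹) *
            (ENNReal.ofReal ((s (k + 1) ^ 2)⁻¹) *
            ENNReal.ofReal (D ^ 4 * (s k) ^ (3 + 2 * ε))))) * ∫⁻ y in A k x, g y := by ring
      _ = _ := by
          rw [← ENNReal.ofReal_mul (by positivity), ← ENNReal.ofReal_mul (by positivity),
            ← ENNReal.ofReal_mul (by positivity), hcoef, ENNReal.ofReal_mul (by positivity), hC2]
          ring
  have hpt : ∀ x ∈ frontier R, ENNReal.ofReal (v x ^ 2) ≤ 2 * (C1 * I1) +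
      ENNReal.ofReal (2 / ε) * ∑' k, C2 * (ENNReal.ofReal ((s k)⁻¹) * ∫⁻ y in A k x, g y) := by
    intro x hx
    have ht := avg_tendsto R hR_open hR_conv hR_bdd v hv x c hx (r / 4) hballR m hmt hprob
    refine (seq_bound (fun k => a k x) (v x) ht ε hε0).trans ?_
    gcongr with k
    · exact hp0 x hx
    · exact hpk k x hx
  have hlay : ∀ k, _ := fun k => layer_int R hne hR_open hR_conv hfin c r hr (s k) (hspos k)
    (hs_half k) (Lk k) (hLo k).measurableSet (fun x hx => Set.subset_biUnion_of_mem (u := A k) hx) g hgm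
  have hIm : ∀ k, Measurable (fun x => ∫⁻ y in A k x, g y) := fun k => (hlay k).1
  have hIm2 : ∀ k, Measurable (fun x => C2 * (ENNReal.ofReal ((s k)⁻¹) * ∫⁻ y in A k x, g y)) :=
    fun k => ((hIm k).const_mul _).const_mul _
  have hsum : ∑' k, ∫⁻ y in Lk k, g y ≤ ∫⁻ y in R, g y := by
    rw [← lintegral_iUnion (fun k => (hLo k).measurableSet) hLd]
    exact lintegral_mono_set (Set.iUnion_subset hLR)
  have hε2 : (1 : ℝ≥0∞) ≤ ENNReal.ofReal (1 / ε) := by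
    rw [← ENNReal.ofReal_one]
    apply ENNReal.ofReal_le_ofReal
    rw [le_div_iff₀ hε0]; linarith
  have he2 : ENNReal.ofReal (2 / ε) = 2 * ENNReal.ofReal (1 / ε) := by
    rw [show 2 / ε = 2 * (1 / ε) by ring, ENNReal.ofReal_mul (by norm_num)]; simp
  calc ∫⁻ x in frontier R, ENNReal.ofReal (v x ^ 2) ∂(μH[1])
      ≤ ∫⁻ x in frontier R, (2 * (C1 * I1) + ENNReal.ofReal (2 / ε) *
          ∑' k, C2 * (ENNReal.ofReal ((s k)⁻¹) * ∫⁻ y in A k x, g y)) ∂(μH[1]) :=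
        setLIntegral_mono (by
          apply Measurable.add measurable_const
          exact (Measurable.tsum hIm2).const_mul _) hpt
    _ = 2 * (C1 * I1) * H + ENNReal.ofReal (2 / ε) * ∑' k, C2 * (ENNReal.ofReal ((s k)⁻¹) *
          ∫⁻ x in frontier R, (∫⁻ y in A k x, g y) ∂(μH[1])) := by
        rw [lintegral_add_left measurable_const, lintegral_const, Measure.restrict_apply_univ,
          lintegral_const_mul _ (Measurable.tsum hIm2),
          lintegral_tsum (fun k => (hIm2 k).aemeasurable)]
        congr 3
        ext k
        rw [lintegral_const_mul _ ((hIm k).const_mul _), lintegral_const_mul _ (hIm k)]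
    _ ≤ 2 * (C1 * I1) * H + ENNReal.ofReal (2 / ε) * ∑' k, C2 * (ENNReal.ofReal (2 * Real.pi * r) *
          ∫⁻ y in Lk k, g y) := by
        refine add_le_add_right (mul_le_mul_right (ENNReal.tsum_le_tsum fun k =>
          mul_le_mul_right ?_ _) _) _
        refine (mul_le_mul_right (hlay k).2 _).trans ?_
        rw [← mul_assoc, ← ENNReal.ofReal_mul (by have := hspos k; positivity)]
        have hne0 := (hspos k).ne'
        have e9 : (s k)⁻¹ * (2 * Real.pi * r * s k) = 2 * Real.pi * r := by field_simp
        rw [e9]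
    _ = 2 * (C1 * I1) * H + 2 * ENNReal.ofReal (1 / ε) * (C2 * (ENNReal.ofReal (2 * Real.pi * r) *
          ∑' k, ∫⁻ y in Lk k, g y)) := by
        rw [ENNReal.tsum_mul_left, ENNReal.tsum_mul_left, he2]
    _ ≤ 2 * (C1 * I1) * H * ENNReal.ofReal (1 / ε) +
        2 * ENNReal.ofReal (1 / ε) * (C2 * (ENNReal.ofReal (2 * Real.pi * r) *
          ∫⁻ y in R, g y)) := by
        refine add_le_add (le_mul_of_one_le_right (zero_le) hε2) ?_
        gcongr
    _ = ENNReal.ofReal (1 / ε) * ((2 * C1 * H) * I1 + (2 * C2 * ENNReal.ofReal (2 * Real.pi * r)) *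
          ∫⁻ y in R, g y) := by ring
    _ ≤ ENNReal.ofReal (1 / ε) * (K * I1 + K * ∫⁻ y in R, g y) := by
        gcongr
        · exact le_self_add
        · exact le_add_self
    _ = ENNReal.ofReal (1 / ε) * K * (I1 + ∫⁻ y in R, g y) := by ring
    _ ≤ _ := by
        gcongr
        rw [← ENNReal.ofReal_toReal hKt, ← ENNReal.ofReal_mul (by positivity)]
        apply ENNReal.ofReal_le_ofReal
        rw [ENNReal.toReal_ofReal ENNReal.toReal_nonneg, one_div, mul_comm, ← div_eq_mul_inv]
        gcongr
        linarith
end
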